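/- Let f(u) = C₁u⁴ + C₂u³ + C₃u² + C₄u + C₅ be a quartic polynomial with real coefficients and let u(t,x) be a smooth real-valued solution of the gKN equation with f, such that u_x(t,x) ≠ 0 for all (t,x). Let T₁, X₁ and T₂ₐ, X₂ₐ be the conserved density–flux pairs T₁ = (1/2)·u_xx²/u_x² + (1/3)·f(u)/u_x², X₁ = −u_xxxx·u_xx/u_x² + (1/2)·u_xxx²/u_x² + (2/3)·u_xxx·(3u_xx² + f(u))/u_x³ − (9/8)·u_xx⁴/u_x⁴ + (1/2)·u_xx²·f(u)/u_x⁴ − u_xx·f'(u)/u_x² + (1/6)·f(u)²/u_x⁴, T₂ₐ = (1/2)·u_xxx²/u_x² − (3/8)·u_xx⁴/u_x⁴ + (5/6)·u_xx²·f(u)/u_x⁴ + (1/18)·f(u)²/u_x⁴ − (5/9)·f''(u), and X₂ₐ = −u_xxxxx·u_xxx/u_x² + (1/2)·u_xxxx²/u_x² + u_xxxx·u_xxx·u_xx/u_x³ + (1/6)·u_xxxx·u_xx·(9u_xx² − 10f(u))/u_x⁴ + 3·u_xxx³/u_x³ − (2/3)·u_xxx²·(9u_xx² − 2f(u))/u_x⁴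 + (1/9)·u_xxx·(15u_xx² + 2f(u))·f(u)/u_x⁵ + (5/3)·u_xxx·u_xx·f'(u)/u_x³ + (9/8)·u_xx⁶/u_x⁶ − (29/12)·u_xx⁴·f(u)/u_x⁶ − (1/6)·u_xx³·f'(u)/u_x⁴ + (19/18)·u_xx²·f(u)²/u_x⁶ − (5/6)·u_xx²·f''(u)/u_x² − (5/9)·u_xx·f(u)·f'(u)/u_x⁴ − (4/9)·u_xx·f'''(u) + (1/27)·f(u)³/u_x⁶ + (5/18)·(2f(u)f''(u) − f'(u)²)/u_x² + (2/9)·u_x²·f''''(u). Define T₃ₐ(t,x) = 3t·T₂ₐ(t,x) − x·T₁(t,x) and X₃ₐ(t,x) = 3t·X₂ₐ(t,x) − x·X₁(t,x) − u_xxx·u_xx/u_x² + (2/3)·u_xx·f(u)/u_x³ + (5/3)·f'(u)/u_x. Then ∂_t T₃ₐ(t,x) + ∂_x X₃ₐ(t,x) = 0 at every point (t,x). (T₃ₐ is a local conserved density of the Krichever–Novikov equation that depends explicitly on t and x.) -/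

import Mathlib

open Real

/-- Partial derivative with respect to the second (spatial) variable. -/
noncomputable def pdx (u : ℝ → ℝ → ℝ) : ℝ → ℝ → ℝ := fun t x => deriv (fun y => u t y) x

/-- Partial derivative with respect to the first (time) variable. -/
noncomputable def pdt (u : ℝ → ℝ → ℝ) : ℝ → ℝ → ℝ := fun t x => deriv (fun s => u s x) t

/-- `u` solves the generalized Krichever-Novikov equation with nonlinearity `f`:
`u_t = u_xxx - (3/2) u_xx^2/u_x + f(u)/u_x`. -/
def isGKN (f : ℝ → ℝ) (u : ℝ → ℝ → ℝ) : Prop :=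
  ∀ t x, pdt u t x =
    pdx (pdx (pdx u)) t x - (3/2) * (pdx (pdx u) t x)^2 / pdx u t x + f (u t x) / pdx u t x

/-- A conservation law: `∂_t T + ∂_x X = 0` at every point. -/
def consLaw (T X : ℝ → ℝ → ℝ) : Prop := ∀ t x, pdt T t x + pdx X t x = 0

/-- The conserved density `T₁ = (1/2) u_xx²/u_x² + (1/3) f(u)/u_x²`. -/
noncomputable def T1 (f : ℝ → ℝ) (u : ℝ → ℝ → ℝ) : ℝ → ℝ → ℝ := fun t x =>
  (1/2) * (pdx (pdx u) t x)^2 / (pdx u t x)^2 + (1/3) * f (u t x) / (pdx u t x)^2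

/-- The flux `X₁` corresponding to `T₁`. -/
noncomputable def X1 (f : ℝ → ℝ) (u : ℝ → ℝ → ℝ) : ℝ → ℝ → ℝ := fun t x =>
  -((pdx (pdx (pdx (pdx u))) t x) * (pdx (pdx u) t x) / (pdx u t x)^2) + (1/2) * (pdx (pdx (pdx u)) t x)^2 / (pdx u t x)^2
    + (2/3) * (pdx (pdx (pdx u)) t x) * (3 * (pdx (pdx u) t x)^2 + f (u t x)) / (pdx u t x)^3
    - (9/8) * (pdx (pdx u) t x)^4 / (pdx u t x)^4 + (1/2) * (pdx (pdx u) t x)^2 * (f (u t x)) / (pdx u t x)^4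
    - (pdx (pdx u) t x) * (deriv f (u t x)) / (pdx u t x)^2 + (1/6) * (f (u t x))^2 / (pdx u t x)^4

/-- The conserved density `T₂ₐ`. -/
noncomputable def T2a (f : ℝ → ℝ) (u : ℝ → ℝ → ℝ) : ℝ → ℝ → ℝ := fun t x =>
  (1/2) * (pdx (pdx (pdx u)) t x)^2 / (pdx u t x)^2 - (3/8) * (pdx (pdx u) t x)^4 / (pdx u t x)^4
    + (5/6) * (pdx (pdx u) t x)^2 * (f (u t x)) / (pdx u t x)^4 + (1/18) * (f (u t x))^2 / (pdx u t x)^4 - (5/9) * (deriv (deriv f) (u t x))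

/-- The flux `X₂ₐ` corresponding to `T₂ₐ`. -/
noncomputable def X2a (f : ℝ → ℝ) (u : ℝ → ℝ → ℝ) : ℝ → ℝ → ℝ := fun t x =>
  -((pdx (pdx (pdx (pdx (pdx u)))) t x) * (pdx (pdx (pdx u)) t x) / (pdx u t x)^2) + (1/2) * (pdx (pdx (pdx (pdx u))) t x)^2 / (pdx u t x)^2
    + (pdx (pdx (pdx (pdx u))) t x) * (pdx (pdx (pdx u)) t x) * (pdx (pdx u) t x) / (pdx u t x)^3
    + (1/6) * (pdx (pdx (pdx (pdx u))) t x) * (pdx (pdx u) t x) * (9 * (pdx (pdx u) t x)^2 - 10 * (f (u t x))) / (pdx u t x)^4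
    + 3 * (pdx (pdx (pdx u)) t x)^3 / (pdx u t x)^3
    - (2/3) * (pdx (pdx (pdx u)) t x)^2 * (9 * (pdx (pdx u) t x)^2 - 2 * (f (u t x))) / (pdx u t x)^4
    + (1/9) * (pdx (pdx (pdx u)) t x) * (15 * (pdx (pdx u) t x)^2 + 2 * (f (u t x))) * (f (u t x)) / (pdx u t x)^5
    + (5/3) * (pdx (pdx (pdx u)) t x) * (pdx (pdx u) t x) * (deriv f (u t x)) / (pdx u t x)^3
    + (9/8) * (pdx (pdx u) t x)^6 / (pdx u t x)^6 - (29/12) * (pdx (pdx u) t x)^4 * (f (u t x)) / (pdx u t x)^6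
    - (1/6) * (pdx (pdx u) t x)^3 * (deriv f (u t x)) / (pdx u t x)^4
    + (19/18) * (pdx (pdx u) t x)^2 * (f (u t x))^2 / (pdx u t x)^6
    - (5/6) * (pdx (pdx u) t x)^2 * (deriv (deriv f) (u t x)) / (pdx u t x)^2
    - (5/9) * (pdx (pdx u) t x) * (f (u t x)) * (deriv f (u t x)) / (pdx u t x)^4
    - (4/9) * (pdx (pdx u) t x) * (deriv (deriv (deriv f)) (u t x)) + (1/27) * (f (u t x))^3 / (pdx u t x)^6
    + (5/18) * (2 * (f (u t x)) * (deriv (deriv f) (u t x)) - (deriv f (u t x))^2) / (pdx u t x)^2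
    + (2/9) * (pdx u t x)^2 * (deriv (deriv (deriv (deriv f))) (u t x))

/-- The conserved density `T₃ₐ = 3t·T₂ₐ - x·T₁`, depending explicitly on `t,x`. -/
noncomputable def T3a (f : ℝ → ℝ) (u : ℝ → ℝ → ℝ) : ℝ → ℝ → ℝ := fun t x =>
  3 * t * T2a f u t x - x * T1 f u t x

/-- The flux `X₃ₐ` corresponding to `T₃ₐ`. -/
noncomputable def X3a (f : ℝ → ℝ) (u : ℝ → ℝ → ℝ) : ℝ → ℝ → ℝ := fun t x =>
  3 * t * X2a f u t x - x * X1 f u t x - (pdx (pdx (pdx u)) t x) * (pdx (pdx u) t x) / (pdx u t x)^2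
    + (2/3) * (pdx (pdx u) t x) * (f (u t x)) / (pdx u t x)^3 + (5/3) * (deriv f (u t x)) / (pdx u t x)

/-!
Put `w = ∂ₓ log uₓ` and `aₖ = f⁽ᵏ⁾(u) uₓᵏ⁻²`. The equation says `u_t = s uₓ` with
`s = wₓ - w²/2 + a₀` (Schwarzian derivative plus potential), so
`∂ₜ log uₓ = sₓ + w s =: σ`, `∂ₜ w = ∂ₓ σ` and

  `∂ₓ aₖ = aₖ₊₁ + (k - 2) w aₖ`,  `∂ₜ aₖ = aₖ₊₁ s + (k - 2) σ aₖ`.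

In these variables all densities and fluxes are polynomials without `uₓ`, and every conservation
law is an identity in a commutative algebra with two commuting derivations. The pair `(T₁, X₁)`
works for every `f`; `(T₂ₐ, X₂ₐ)` leaves a multiple of `a₅`, which vanishes for quartic `f`.
Finally `X₁ - 3 T₂ₐ` is an `x`-derivative, and it is exactly the defect produced by the
explicit factors `t` and `x` in `3 t T₂ₐ - x T₁`.
-/

namespace KricheverNovikov

open Function
open scoped ContDiff Manifold

section Flow

variable {𝕜 A : Type*} [Field 𝕜] [CommRing A] [Algebra 𝕜 A]

variable (𝕜) in
/-- The ratio `s = u_t / uₓ` in terms of the jet `wₖ = ∂ₓᵏ w` of `w = uₓₓ / uₓ` and the weighted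
coefficients `aₖ`. -/
def speed (w a : ℕ → A) : A := w 1 - (1 / 2 : 𝕜) • w 0 ^ 2 + a 0

/-- The logarithmic time derivative `σ = u_tx / uₓ`. -/
def stretch (Dx : Derivation 𝕜 A A) (w a : ℕ → A) : A :=
  Dx (speed 𝕜 w a) + w 0 * speed 𝕜 w a

/-- The differential relations satisfied by `wₖ = ∂ₓᵏ (uₓₓ / uₓ)` and `aₖ = f⁽ᵏ⁾(u) uₓᵏ⁻²` along a
solution `u` of the gKN equation; they involve neither `u` nor `f` themselves. -/
structure IsKNFlow (Dx Dt : Derivation 𝕜 A A) (w a : ℕ → A) : Prop where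
  dx_slope : ∀ k, Dx (w k) = w (k + 1)
  dx_coeff : ∀ k, Dx (a k) = a (k + 1) + ((k : 𝕜) - 2) • (w 0 * a k)
  dt_slope : ∀ k, Dt (w k) = Dx^[k + 1] (stretch Dx w a)
  dt_coeff : ∀ k, Dt (a k) = a (k + 1) * speed 𝕜 w a + ((k : 𝕜) - 2) • (stretch Dx w a * a k)

section Densities

variable (𝕜) (w a : ℕ → A)

/-- `T₁` as a polynomial in the jet `w` and the weighted coefficients `a`. -/
def density₁ : A := (1 / 2 : 𝕜) • w 0 ^ 2 + (1 / 3 : 𝕜) • a 0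

/-- `X₁` as a polynomial in the jet `w` and the weighted coefficients `a`. -/
def flux₁ : A :=
  -(w 0 * w 2) + (1 / 2 : 𝕜) • w 1 ^ 2 + (3 / 8 : 𝕜) • w 0 ^ 4 + (2 / 3 : 𝕜) • (w 1 * a 0)
    + (7 / 6 : 𝕜) • (w 0 ^ 2 * a 0) - w 0 * a 1 + (1 / 6 : 𝕜) • a 0 ^ 2

/-- `T₂ₐ` as a polynomial in the jet `w` and the weighted coefficients `a`. -/
def density₂ : A :=
  (1 / 2 : 𝕜) • w 1 ^ 2 + w 1 * w 0 ^ 2 + (1 / 8 : 𝕜) • w 0 ^ 4 + (5 / 6 : 𝕜) • (w 0 ^ 2 * a 0)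
    + (1 / 18 : 𝕜) • a 0 ^ 2 - (5 / 9 : 𝕜) • a 2

/-- `X₂ₐ` as a polynomial in the jet `w` and the weighted coefficients `a`. -/
def flux₂ : A :=
  -(w 3 * (w 1 + w 0 ^ 2)) + (1 / 2 : 𝕜) • w 2 ^ 2 - (1 / 2 : 𝕜) • (w 2 * w 0 ^ 3)
    - (5 / 3 : 𝕜) • (w 2 * w 0 * a 0) + (3 / 2 : 𝕜) • (w 1 ^ 2 * w 0 ^ 2)
    + (4 / 3 : 𝕜) • (w 1 ^ 2 * a 0) + (3 / 2 : 𝕜) • (w 1 * w 0 ^ 4)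
    - (2 / 3 : 𝕜) • (w 1 * w 0 ^ 2 * a 0) + (5 / 3 : 𝕜) • (w 1 * w 0 * a 1)
    + (2 / 9 : 𝕜) • (w 1 * a 0 ^ 2) + (1 / 8 : 𝕜) • w 0 ^ 6 - (13 / 12 : 𝕜) • (w 0 ^ 4 * a 0)
    + (3 / 2 : 𝕜) • (w 0 ^ 3 * a 1) + (23 / 18 : 𝕜) • (w 0 ^ 2 * a 0 ^ 2)
    - (5 / 6 : 𝕜) • (w 0 ^ 2 * a 2) - (5 / 9 : 𝕜) • (w 0 * a 0 * a 1) - (4 / 9 : 𝕜) • (w 0 * a 3)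
    + (1 / 27 : 𝕜) • a 0 ^ 3 + (5 / 9 : 𝕜) • (a 0 * a 2) - (5 / 18 : 𝕜) • a 1 ^ 2
    + (2 / 9 : 𝕜) • a 4

/-- The part of `X₃ₐ` without explicit `t` and `x`. -/
def fluxCorrection : A :=
  -(w 0 * (w 1 + w 0 ^ 2)) + (2 / 3 : 𝕜) • (w 0 * a 0) + (5 / 3 : 𝕜) • a 1

/-- `T₃ₐ`, with `τ` and `ξ` in the role of the coordinates `t` and `x`. -/
def density₃ (τ ξ : A) : A := (3 : 𝕜) • (τ * density₂ 𝕜 w a) - ξ * density₁ 𝕜 w a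

/-- `X₃ₐ`, with `τ` and `ξ` in the role of the coordinates `t` and `x`. -/
def flux₃ (τ ξ : A) : A :=
  (3 : 𝕜) • (τ * flux₂ 𝕜 w a) - ξ * flux₁ 𝕜 w a + fluxCorrection 𝕜 w a

end Densities

namespace IsKNFlow

variable [CharZero 𝕜] {Dx Dt : Derivation 𝕜 A A} {w a : ℕ → A}

theorem dt_density₁_add_dx_flux₁ (h : IsKNFlow Dx Dt w a) :
    Dt (density₁ 𝕜 w a) + Dx (flux₁ 𝕜 w a) = 0 := by
  simp only [density₁, flux₁, speed, stretch, h.dt_slope, h.dt_coeff, h.dx_slope, h.dx_coeff,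
    map_add, map_sub, map_neg, map_nsmul, Derivation.map_smul, Derivation.leibniz,
    Derivation.leibniz_pow, smul_eq_mul, pow_one, Nat.reduceAdd, Nat.reduceSub, Nat.cast_zero,
    Nat.cast_one, iterate_succ_apply, iterate_zero, id]
  algebra

theorem dt_density₂_add_dx_flux₂ (h : IsKNFlow Dx Dt w a) (ha : a 5 = 0) :
    Dt (density₂ 𝕜 w a) + Dx (flux₂ 𝕜 w a) = 0 := by
  simp only [density₂, flux₂, speed, stretch, h.dt_slope, h.dt_coeff, h.dx_slope, h.dx_coeff, ha,
    map_add, map_sub, map_neg, map_nsmul, Derivation.map_smul, Derivation.leibniz,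
    Derivation.leibniz_pow, smul_eq_mul, pow_one, Nat.reduceAdd, Nat.reduceSub, Nat.cast_zero,
    Nat.cast_one, Nat.cast_ofNat, iterate_succ_apply, iterate_zero, id]
  algebra

theorem dx_fluxCorrection (h : IsKNFlow Dx Dt w a) :
    Dx (fluxCorrection 𝕜 w a) = flux₁ 𝕜 w a - (3 : 𝕜) • density₂ 𝕜 w a := by
  simp only [fluxCorrection, flux₁, density₂, h.dx_slope, h.dx_coeff, map_add, map_neg,
    Derivation.map_smul, Derivation.leibniz, Derivation.leibniz_pow, smul_eq_mul, pow_one,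
    Nat.reduceAdd, Nat.reduceSub, Nat.cast_zero, Nat.cast_one]
  algebra

theorem dt_density₃_add_dx_flux₃ (h : IsKNFlow Dx Dt w a) (ha : a 5 = 0) {τ ξ : A}
    (dt_τ : Dt τ = 1) (dx_τ : Dx τ = 0) (dt_ξ : Dt ξ = 0) (dx_ξ : Dx ξ = 1) :
    Dt (density₃ 𝕜 w a τ ξ) + Dx (flux₃ 𝕜 w a τ ξ) = 0 := by
  simp only [density₃, flux₃, map_add, map_sub, Derivation.map_smul, Derivation.leibniz,
    smul_eq_mul, dt_τ, dx_τ, dt_ξ, dx_ξ, h.dx_fluxCorrection]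
  linear_combination (norm := algebra)
    (3 : 𝕜) • (τ * h.dt_density₂_add_dx_flux₂ ha) - ξ * h.dt_density₁_add_dx_flux₁

end IsKNFlow

end Flow

section Jets

variable {R A : Type*} [CommRing R] [CommRing A] [Algebra R A]

section Leibniz

variable {D : Derivation R A A} {p q z : A}

theorem derivation_inverse (hpq : p * q = 1) (hp : D p = p * z) : D q = -(q * z) := by
  rw [D.leibniz_of_mul_eq_one ((mul_comm q p).trans hpq), hp, smul_eq_mul]
  linear_combination -(q * z) * hpq

theorem derivation_pow (hp : D p = p * z) (k : ℕ) : D (p ^ k) = (k : R) • (z * p ^ k) := by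
  cases k with
  | zero => simp
  | succ k =>
    rw [D.leibniz_pow, hp, Nat.add_sub_cancel, smul_eq_mul, ← Nat.cast_smul_eq_nsmul R]
    algebra

end Leibniz

/-- The jet `wₖ = ∂ₓᵏ (uₓₓ / uₓ)`, where `q` stands for `1 / uₓ`. -/
def logSlope (Dx : Derivation R A A) (u q : A) (k : ℕ) : A := Dx^[k] (q * Dx (Dx u))

/-- The weighted coefficients `aₖ = Fₖ uₓᵏ⁻²`, where `q` stands for `1 / uₓ` and `Fₖ` for
`f⁽ᵏ⁾(u)`. -/
def coeff (Dx : Derivation R A A) (u q : A) (F : ℕ → A) (k : ℕ) : A := F k * Dx u ^ k * q ^ 2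

variable {Dx : Derivation R A A} {u q : A}

theorem dx_logSlope (k : ℕ) : Dx (logSlope Dx u q k) = logSlope Dx u q (k + 1) :=
  (iterate_succ_apply' Dx k _).symm

theorem derivation_coeff {D : Derivation R A A} {z : A} {F : ℕ → A} (hq : Dx u * q = 1)
    (hF : ∀ k, D (F k) = F (k + 1) * D u) (hz : D (Dx u) = Dx u * z) (k : ℕ) :
    D (coeff Dx u q F k) =
      coeff Dx u q F (k + 1) * (q * D u) + ((k : R) - 2) • (z * coeff Dx u q F k) := by
  have hq_sq : D (q ^ 2) = (-2 : R) • (z * q ^ 2) := by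
    rw [D.leibniz_pow, derivation_inverse hq hz, ← Nat.cast_smul_eq_nsmul R, smul_eq_mul]
    algebra
  simp only [coeff, D.leibniz, hF, hq_sq, derivation_pow hz, smul_eq_mul]
  linear_combination (norm := algebra) (-(F (k + 1) * Dx u ^ k * q ^ 2 * D u)) * hq

section SpaceDerivatives

variable (hq : Dx u * q = 1)

include hq

theorem dx_dx_eq : Dx (Dx u) = Dx u * logSlope Dx u q 0 := by
  rw [logSlope, iterate_zero_apply, ← mul_assoc, hq, one_mul]

theorem dx_dx_dx_eq :
    Dx (Dx (Dx u)) = Dx u * (logSlope Dx u q 1 + logSlope Dx u q 0 ^ 2) := by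
  rw [dx_dx_eq hq, Dx.leibniz, dx_dx_eq hq, dx_logSlope, smul_eq_mul, smul_eq_mul]
  ring

theorem dx_dx_dx_dx_eq :
    Dx (Dx (Dx (Dx u))) = Dx u * (logSlope Dx u q 2
      + (3 : R) • (logSlope Dx u q 0 * logSlope Dx u q 1) + logSlope Dx u q 0 ^ 3) := by
  rw [dx_dx_dx_eq hq]
  simp only [Dx.leibniz, Dx.leibniz_pow, map_add, dx_dx_eq hq, dx_logSlope, smul_eq_mul]
  algebra

theorem dx_dx_dx_dx_dx_eq :
    Dx (Dx (Dx (Dx (Dx u)))) = Dx u * (logSlope Dx u q 3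
      + (4 : R) • (logSlope Dx u q 0 * logSlope Dx u q 2) + (3 : R) • logSlope Dx u q 1 ^ 2
      + (6 : R) • (logSlope Dx u q 0 ^ 2 * logSlope Dx u q 1) + logSlope Dx u q 0 ^ 4) := by
  rw [dx_dx_dx_dx_eq hq]
  simp only [Dx.leibniz, Dx.leibniz_pow, map_add, Derivation.map_smul, dx_dx_eq hq, dx_logSlope,
    smul_eq_mul]
  algebra

end SpaceDerivatives

end Jets

section Solution

variable {𝕜 A : Type*} [Field 𝕜] [CommRing A] [Algebra 𝕜 A] {Dx : Derivation 𝕜 A A} {u q : A}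

/-- The gKN equation in a commutative algebra with derivations `Dx` and `Dt`: `q` stands for
`1 / uₓ` and `Fₖ` for `f⁽ᵏ⁾(u)`, both characterised through the derivations. -/
structure IsKNSolution (Dx Dt : Derivation 𝕜 A A) (u q : A) (F : ℕ → A) : Prop where
  comm : ∀ b, Dt (Dx b) = Dx (Dt b)
  dx_mul_inverse : Dx u * q = 1
  dx_chain : ∀ k, Dx (F k) = F (k + 1) * Dx u
  dt_chain : ∀ k, Dt (F k) = F (k + 1) * Dt u
  evolution : Dt u = Dx (Dx (Dx u)) - (3 / 2 : 𝕜) • (Dx (Dx u) ^ 2 * q) + F 0 * q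

namespace IsKNSolution

variable [CharZero 𝕜] {Dt : Derivation 𝕜 A A} {F : ℕ → A}

theorem dt_eq (h : IsKNSolution Dx Dt u q F) :
    Dt u = Dx u * speed 𝕜 (logSlope Dx u q) (coeff Dx u q F) := by
  have hq := h.dx_mul_inverse
  rw [h.evolution, dx_dx_dx_eq hq, dx_dx_eq hq, speed, coeff]
  linear_combination (norm := algebra)
    (-(3 / 2 : 𝕜) • (Dx u * logSlope Dx u q 0 ^ 2) - F 0 * q) * hq

theorem dt_dx_eq (h : IsKNSolution Dx Dt u q F) :
    Dt (Dx u) = Dx u * stretch Dx (logSlope Dx u q) (coeff Dx u q F) := by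
  rw [h.comm, h.dt_eq, Dx.leibniz, dx_dx_eq h.dx_mul_inverse, stretch, smul_eq_mul, smul_eq_mul]
  ring

theorem dt_logSlope (h : IsKNSolution Dx Dt u q F) (k : ℕ) :
    Dt (logSlope Dx u q k) = Dx^[k + 1] (stretch Dx (logSlope Dx u q) (coeff Dx u q F)) := by
  induction k with
  | zero =>
    have hq := h.dx_mul_inverse
    set σ := stretch Dx (logSlope Dx u q) (coeff Dx u q F)
    have hσ : Dt (Dx u) = Dx u * σ := h.dt_dx_eq
    calc Dt (q * Dx (Dx u))
        = q * Dx (Dx u * σ) + Dx (Dx u) * Dt q := by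
          rw [Dt.leibniz, h.comm, hσ, smul_eq_mul, smul_eq_mul]
      _ = Dx σ := by
          rw [Dx.leibniz, derivation_inverse hq hσ, smul_eq_mul, smul_eq_mul]
          linear_combination Dx σ * hq
  | succ k ih => rw [← dx_logSlope, h.comm, ih, ← iterate_succ_apply' Dx]

theorem isKNFlow (h : IsKNSolution Dx Dt u q F) :
    IsKNFlow Dx Dt (logSlope Dx u q) (coeff Dx u q F) where
  dx_slope := dx_logSlope
  dx_coeff k := by
    have hq := h.dx_mul_inverse
    rw [derivation_coeff hq h.dx_chain (dx_dx_eq hq), mul_comm q, hq, mul_one]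
  dt_slope := h.dt_logSlope
  dt_coeff k := by
    have hq := h.dx_mul_inverse
    rw [derivation_coeff hq h.dt_chain h.dt_dx_eq, h.dt_eq]
    linear_combination
      coeff Dx u q F (k + 1) * speed 𝕜 (logSlope Dx u q) (coeff Dx u q F) * hq

end IsKNSolution

end Solution

section Smooth

variable {E : Type*} [NormedAddCommGroup E] [NormedSpace ℝ E]

variable (E) in
/-- The algebra of smooth real functions on `E`. -/
abbrev SmoothFun : Type _ := C^∞⟮𝓘(ℝ, E), E; ℝ⟯

namespace SmoothFun

theorem contDiff (v : SmoothFun E) : ContDiff ℝ ∞ v := v.contMDiff.contDiff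

theorem differentiable (v : SmoothFun E) : Differentiable ℝ v :=
  v.contDiff.differentiable (by simp)

theorem differentiable_fderiv (v : SmoothFun E) : Differentiable ℝ (fderiv ℝ v) :=
  (v.contDiff.fderiv_right (m := ∞) (by simp)).differentiable (by simp)

/-- Differentiation in the direction `e`, as a derivation of the algebra of smooth functions. -/
noncomputable def directionalDerivation (e : E) : Derivation ℝ (SmoothFun E) (SmoothFun E) :=
  Derivation.mk'
    { toFun v := ⟨fun z => fderiv ℝ v z e,
        ((v.contDiff.fderiv_right (by simp)).clm_apply contDiff_const).contMDiff⟩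
      map_add' v w := ContMDiffMap.ext fun z =>
        DFunLike.congr_fun (fderiv_add (v.differentiable z) (w.differentiable z)) e
      map_smul' c v := ContMDiffMap.ext fun z =>
        DFunLike.congr_fun (fderiv_const_smul (v.differentiable z) c) e }
    fun v w => ContMDiffMap.ext fun z =>
      DFunLike.congr_fun (fderiv_mul (v.differentiable z) (w.differentiable z)) e

theorem coe_directionalDerivation (e : E) (v : SmoothFun E) :
    ⇑(directionalDerivation e v) = fun z => fderiv ℝ v z e := rfl

theorem deriv_eq_directionalDerivation (g : SmoothFun ℝ) :
    deriv g = directionalDerivation 1 g := rfl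

theorem directionalDerivation_comm (e₁ e₂ : E) (v : SmoothFun E) :
    directionalDerivation e₁ (directionalDerivation e₂ v)
      = directionalDerivation e₂ (directionalDerivation e₁ v) := by
  have second_derivative (d₁ d₂ z : E) :
      directionalDerivation d₁ (directionalDerivation d₂ v) z
        = fderiv ℝ (fderiv ℝ v) z d₁ d₂ := by
    simp only [coe_directionalDerivation,
      fderiv_clm_apply (v.differentiable_fderiv z) (differentiableAt_const d₂)]
    simp
  have symmetric (z : E) : IsSymmSndFDerivAt ℝ v z :=
    v.contDiff.contDiffAt.isSymmSndFDerivAt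
      (by simpa using WithTop.coe_le_coe.2 (le_top : (2 : ℕ∞) ≤ ⊤))
  ext z
  rw [second_derivative, second_derivative, symmetric z e₁ e₂]

theorem directionalDerivation_comp (e : E) (g : SmoothFun ℝ) (v : SmoothFun E) :
    directionalDerivation e (g.comp v)
      = (directionalDerivation 1 g).comp v * directionalDerivation e v := by
  ext z
  have chain := ((g.differentiable (v z)).hasDerivAt.comp_hasFDerivAt z
    (v.differentiable z).hasFDerivAt).fderiv
  exact DFunLike.congr_fun chain e

/-- A continuous linear functional as a smooth function; used for coordinates. -/
noncomputable def ofCLM (L : E →L[ℝ] ℝ) : SmoothFun E := ⟨L, L.contDiff.contMDiff⟩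

theorem directionalDerivation_ofCLM (e : E) (L : E →L[ℝ] ℝ) :
    directionalDerivation e (ofCLM L) = algebraMap ℝ (SmoothFun E) (L e) := by
  ext z
  exact DFunLike.congr_fun L.fderiv e

/-- The composite `g⁽ᵏ⁾ ∘ v`. -/
noncomputable def iteratedComp (g : SmoothFun ℝ) (v : SmoothFun E) (k : ℕ) : SmoothFun E :=
  ((directionalDerivation 1)^[k] g).comp v

theorem directionalDerivation_iteratedComp (e : E) (g : SmoothFun ℝ) (v : SmoothFun E) (k : ℕ) :
    directionalDerivation e (iteratedComp g v k)
      = iteratedComp g v (k + 1) * directionalDerivation e v := by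
  rw [iteratedComp, directionalDerivation_comp, iteratedComp, iterate_succ_apply']

theorem exists_mul_eq_one {v : SmoothFun E} (hv : ∀ z, v z ≠ 0) : ∃ q, v * q = 1 :=
  ⟨⟨fun z => (v z)⁻¹, (v.contDiff.inv hv).contMDiff⟩,
    ContMDiffMap.ext fun z => mul_inv_cancel₀ (hv z)⟩

theorem apply_eq_inv_of_mul_eq_one {v q : SmoothFun E} (hvq : v * q = 1) (z : E) :
    q z = (v z)⁻¹ :=
  (inv_eq_of_mul_eq_one_right (DFunLike.congr_fun hvq z)).symm

theorem apply_ne_zero_of_mul_eq_one {v q : SmoothFun E} (hvq : v * q = 1) (z : E) : v z ≠ 0 :=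
  left_ne_zero_of_mul_eq_one (DFunLike.congr_fun hvq z)

end SmoothFun

end Smooth

theorem iterate_derivation_aeval {R A : Type*} [CommSemiring R] [CommSemiring A]
    [Algebra R A] {D : Derivation R A A} {x : A} (hx : D x = 1) (P : Polynomial R) (k : ℕ) :
    D^[k] (Polynomial.aeval x P) = Polynomial.aeval x (Polynomial.derivative^[k] P) := by
  induction k with
  | zero => rfl
  | succ k ih =>
    rw [iterate_succ_apply', ih, D.map_aeval, hx, smul_eq_mul, mul_one, iterate_succ_apply']

namespace SmoothFun

/-- The smooth function defined by a real polynomial. -/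
noncomputable def ofPolynomial (P : Polynomial ℝ) : SmoothFun ℝ :=
  Polynomial.aeval (ofCLM (.id ℝ ℝ)) P

theorem ofPolynomial_apply (P : Polynomial ℝ) (y : ℝ) : ofPolynomial P y = P.eval y := by
  induction P using Polynomial.induction_on' with
  | add P Q hP hQ => rw [Polynomial.eval_add, ← hP, ← hQ, ofPolynomial, map_add]; rfl
  | monomial n c => rw [Polynomial.eval_monomial, ofPolynomial, Polynomial.aeval_monomial]; rfl

theorem iterate_derivation_ofPolynomial_eq_zero {P : Polynomial ℝ} {k : ℕ} (hP : P.natDegree < k) :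
    (directionalDerivation 1)^[k] (ofPolynomial P) = 0 := by
  have derivation_id : directionalDerivation 1 (ofCLM (.id ℝ ℝ)) = 1 :=
    (directionalDerivation_ofCLM _ _).trans (map_one _)
  rw [ofPolynomial, iterate_derivation_aeval derivation_id,
    Polynomial.iterate_derivative_eq_zero hP, map_zero]

end SmoothFun

section Plane

open SmoothFun

/-- `∂ₓ` on smooth functions of `(t, x)`. -/
noncomputable abbrev spaceDerivation :
    Derivation ℝ (SmoothFun (ℝ × ℝ)) (SmoothFun (ℝ × ℝ)) := directionalDerivation (0, 1)

/-- `∂ₜ` on smooth functions of `(t, x)`. -/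
noncomputable abbrev timeDerivation :
    Derivation ℝ (SmoothFun (ℝ × ℝ)) (SmoothFun (ℝ × ℝ)) := directionalDerivation (1, 0)

theorem pdx_curry (v : SmoothFun (ℝ × ℝ)) : pdx (curry v) = curry (spaceDerivation v) := by
  funext t x
  exact ((v.differentiable (t, x)).hasFDerivAt.comp_hasDerivAt x
    ((hasDerivAt_const x t).prodMk (hasDerivAt_id x))).deriv

theorem pdt_curry (v : SmoothFun (ℝ × ℝ)) : pdt (curry v) = curry (timeDerivation v) := by
  funext t x
  exact ((v.differentiable (t, x)).hasFDerivAt.comp_hasDerivAt t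
    ((hasDerivAt_id t).prodMk (hasDerivAt_const t x))).deriv

theorem consLaw_curry {T X : SmoothFun (ℝ × ℝ)} (h : timeDerivation T + spaceDerivation X = 0) :
    consLaw (curry T) (curry X) := fun t x => by
  rw [pdt_curry, pdx_curry]
  exact DFunLike.congr_fun h (t, x)

/-- The coordinate function `t`. -/
noncomputable def timeCoord : SmoothFun (ℝ × ℝ) := ofCLM (.fst ℝ ℝ ℝ)

/-- The coordinate function `x`. -/
noncomputable def spaceCoord : SmoothFun (ℝ × ℝ) := ofCLM (.snd ℝ ℝ ℝ)

/-- The jet `∂ₓᵏ (uₓₓ / uₓ)` of a function of `(t, x)`, where `q` stands for `1 / uₓ`. -/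
noncomputable abbrev slopeJet (u q : SmoothFun (ℝ × ℝ)) : ℕ → SmoothFun (ℝ × ℝ) :=
  logSlope spaceDerivation u q

/-- The weighted coefficients `f⁽ᵏ⁾(u) uₓᵏ⁻²` of a function `u` of `(t, x)`, where `q` stands for
`1 / uₓ`. -/
noncomputable abbrev potentialCoeff (f : SmoothFun ℝ) (u q : SmoothFun (ℝ × ℝ)) :
    ℕ → SmoothFun (ℝ × ℝ) :=
  coeff spaceDerivation u q (iteratedComp f u)

variable {f : SmoothFun ℝ} {u q : SmoothFun (ℝ × ℝ)}

theorem isKNSolution_of_isGKN (hq : spaceDerivation u * q = 1) (hsol : isGKN f (curry u)) :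
    IsKNSolution spaceDerivation timeDerivation u q (iteratedComp f u) where
  comm := directionalDerivation_comm _ _
  dx_mul_inverse := hq
  dx_chain := directionalDerivation_iteratedComp _ f u
  dt_chain := directionalDerivation_iteratedComp _ f u
  evolution := by
    ext ⟨t, x⟩
    have equation := hsol t x
    simp only [pdt_curry, pdx_curry, div_eq_mul_inv _ (curry _ _ _), mul_assoc] at equation
    simp only [curry_apply, ← apply_eq_inv_of_mul_eq_one hq] at equation
    exact equation

section Evaluation

variable (hq : spaceDerivation u * q = 1)

include hq

theorem potentialCoeff_apply (k : ℕ) (z : ℝ × ℝ) :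
    potentialCoeff f u q k z =
      ((directionalDerivation 1)^[k] f) (u z) * spaceDerivation u z ^ k
        / spaceDerivation u z ^ 2 := by
  rw [div_eq_mul_inv, ← inv_pow, ← apply_eq_inv_of_mul_eq_one hq]
  rfl

theorem dx_dx_apply (z : ℝ × ℝ) :
    spaceDerivation (spaceDerivation u) z = spaceDerivation u z * slopeJet u q 0 z :=
  DFunLike.congr_fun (dx_dx_eq hq) z

theorem dx_dx_dx_apply (z : ℝ × ℝ) :
    spaceDerivation (spaceDerivation (spaceDerivation u)) z
      = spaceDerivation u z * (slopeJet u q 1 z + slopeJet u q 0 z ^ 2) :=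
  DFunLike.congr_fun (dx_dx_dx_eq hq) z

theorem dx_dx_dx_dx_apply (z : ℝ × ℝ) :
    spaceDerivation (spaceDerivation (spaceDerivation (spaceDerivation u))) z
      = spaceDerivation u z * (slopeJet u q 2 z + 3 * (slopeJet u q 0 z * slopeJet u q 1 z)
        + slopeJet u q 0 z ^ 3) :=
  DFunLike.congr_fun (dx_dx_dx_dx_eq hq) z

theorem dx_dx_dx_dx_dx_apply (z : ℝ × ℝ) :
    spaceDerivation (spaceDerivation (spaceDerivation (spaceDerivation (spaceDerivation u)))) z
      = spaceDerivation u z * (slopeJet u q 3 z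
        + 4 * (slopeJet u q 0 z * slopeJet u q 2 z) + 3 * slopeJet u q 1 z ^ 2
        + 6 * (slopeJet u q 0 z ^ 2 * slopeJet u q 1 z) + slopeJet u q 0 z ^ 4) :=
  DFunLike.congr_fun (dx_dx_dx_dx_dx_eq hq) z

theorem T1_curry_apply (t x : ℝ) :
    T1 f (curry u) t x = density₁ ℝ (slopeJet u q) (potentialCoeff f u q) (t, x) := by
  have hp := apply_ne_zero_of_mul_eq_one hq (t, x)
  -- The algebra operations on smooth functions are pointwise, so evaluation commutes with
  -- `density₁` definitionally.
  change _ = density₁ ℝ (slopeJet u q · (t, x)) (potentialCoeff f u q · (t, x))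
  simp only [T1, pdx_curry, curry_apply, density₁, potentialCoeff_apply hq, dx_dx_apply hq,
    iterate_zero_apply, smul_eq_mul]
  field_simp

theorem X1_curry_apply (t x : ℝ) :
    X1 f (curry u) t x = flux₁ ℝ (slopeJet u q) (potentialCoeff f u q) (t, x) := by
  have hp := apply_ne_zero_of_mul_eq_one hq (t, x)
  change _ = flux₁ ℝ (slopeJet u q · (t, x)) (potentialCoeff f u q · (t, x))
  simp only [X1, pdx_curry, curry_apply, deriv_eq_directionalDerivation, flux₁,
    potentialCoeff_apply hq, dx_dx_apply hq, dx_dx_dx_apply hq, dx_dx_dx_dx_apply hq,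
    iterate_succ_apply, iterate_zero_apply, smul_eq_mul]
  field_simp
  ring

theorem T2a_curry_apply (t x : ℝ) :
    T2a f (curry u) t x = density₂ ℝ (slopeJet u q) (potentialCoeff f u q) (t, x) := by
  have hp := apply_ne_zero_of_mul_eq_one hq (t, x)
  change _ = density₂ ℝ (slopeJet u q · (t, x)) (potentialCoeff f u q · (t, x))
  simp only [T2a, pdx_curry, curry_apply, deriv_eq_directionalDerivation, density₂,
    potentialCoeff_apply hq, dx_dx_apply hq, dx_dx_dx_apply hq,
    iterate_succ_apply, iterate_zero_apply, smul_eq_mul]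
  field_simp
  ring

theorem X2a_curry_apply (t x : ℝ) :
    X2a f (curry u) t x = flux₂ ℝ (slopeJet u q) (potentialCoeff f u q) (t, x) := by
  have hp := apply_ne_zero_of_mul_eq_one hq (t, x)
  change _ = flux₂ ℝ (slopeJet u q · (t, x)) (potentialCoeff f u q · (t, x))
  simp only [X2a, pdx_curry, curry_apply, deriv_eq_directionalDerivation, flux₂,
    potentialCoeff_apply hq, dx_dx_apply hq, dx_dx_dx_apply hq, dx_dx_dx_dx_apply hq,
    dx_dx_dx_dx_dx_apply hq, iterate_succ_apply, iterate_zero_apply, smul_eq_mul]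
  field_simp
  ring

theorem T3a_curry :
    T3a f (curry u)
      = curry ⇑(density₃ ℝ (slopeJet u q) (potentialCoeff f u q) timeCoord spaceCoord) := by
  funext t x
  rw [T3a, T1_curry_apply hq, T2a_curry_apply hq, mul_assoc]
  rfl

theorem X3a_curry :
    X3a f (curry u)
      = curry ⇑(flux₃ ℝ (slopeJet u q) (potentialCoeff f u q) timeCoord spaceCoord) := by
  funext t x
  have hp := apply_ne_zero_of_mul_eq_one hq (t, x)
  change _ = 3 * (t * flux₂ ℝ (slopeJet u q) (potentialCoeff f u q) (t, x))
    - x * flux₁ ℝ (slopeJet u q) (potentialCoeff f u q) (t, x)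
    + fluxCorrection ℝ (slopeJet u q · (t, x)) (potentialCoeff f u q · (t, x))
  rw [X3a, X1_curry_apply hq, X2a_curry_apply hq]
  simp only [pdx_curry, curry_apply, deriv_eq_directionalDerivation, fluxCorrection,
    potentialCoeff_apply hq, dx_dx_apply hq, dx_dx_dx_apply hq,
    iterate_succ_apply, iterate_zero_apply, smul_eq_mul]
  field_simp
  ring

end Evaluation

theorem consLaw_T3a (hf : (directionalDerivation 1)^[5] f = 0)
    (hux : ∀ z, spaceDerivation u z ≠ 0) (hsol : isGKN f (curry u)) :
    consLaw (T3a f (curry u)) (X3a f (curry u)) := by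
  obtain ⟨q, hq⟩ := exists_mul_eq_one hux
  have flow := (isKNSolution_of_isGKN hq hsol).isKNFlow
  have coeff_five : potentialCoeff f u q 5 = 0 := by
    rw [potentialCoeff, coeff, iteratedComp, hf]
    ext
    simp
  rw [T3a_curry hq, X3a_curry hq]
  refine consLaw_curry (flow.dt_density₃_add_dx_flux₃ coeff_five ?_ ?_ ?_ ?_) <;>
    simp [timeCoord, spaceCoord, directionalDerivation_ofCLM]

end Plane

end KricheverNovikov

/-- `(T₃ₐ, X₃ₐ)` with `T₃ₐ = 3t·T₂ₐ - x·T₁` is a conservation law of the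
KN equation (quartic `f`) whose density depends explicitly on `t` and `x`. -/
theorem KN_conservation_law_T3a (C₁ C₂ C₃ C₄ C₅ : ℝ) (f : ℝ → ℝ)
    (hf : ∀ v, f v = C₁ * v^4 + C₂ * v^3 + C₃ * v^2 + C₄ * v + C₅)
    (u : ℝ → ℝ → ℝ) (hu : ContDiff ℝ (⊤ : ℕ∞) (Function.uncurry u))
    (hux : ∀ t x, pdx u t x ≠ 0)
    (hsol : isGKN f u) :
    consLaw (T3a f u) (X3a f u) := by
  let P : Polynomial ℝ := .C C₁ * .X ^ 4 + .C C₂ * .X ^ 3 + .C C₃ * .X ^ 2 + .C C₄ * .X + .C C₅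
  have degree_P : P.natDegree ≤ 4 := by unfold P; compute_degree
  have f_eq : f = KricheverNovikov.SmoothFun.ofPolynomial P := by
    funext y
    simp [P, hf, KricheverNovikov.SmoothFun.ofPolynomial_apply]
  let v : KricheverNovikov.SmoothFun (ℝ × ℝ) := ⟨Function.uncurry u, hu.contMDiff⟩
  have v_x_ne_zero (z : ℝ × ℝ) : KricheverNovikov.spaceDerivation v z ≠ 0 := fun h =>
    hux z.1 z.2 ((congrFun₂ (KricheverNovikov.pdx_curry v) z.1 z.2).trans h)
  rw [f_eq] at hsol ⊢
  exact KricheverNovikov.consLaw_T3a (u := v)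
    (KricheverNovikov.SmoothFun.iterate_derivation_ofPolynomial_eq_zero (by lia)) v_x_ne_zero hsol
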